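/- Let t_j := (Σ_{σ∈Λ_j} m_σ log m_σ)/(Σ_{σ∈Λ_j} m_σ log c_σ) and s_k := u_k/l_k as above, with P irreducible. Then there exist a constant C_3 and, for each large j, integers k_j^{(1)}, k_j^{(2)} ∈ [k_{1j}, k_{2j}] such that s_{k_j^{(1)}} − C_3/j ≤ t_j ≤ s_{k_j^{(2)}} + C_3/j, where k_{1j} = min_{σ∈Λ_j}|σ| and k_{2j} = max_{σ∈Λ_j}|σ|. -/

import Mathlib

open Finset

/-- Product of transition weights along a word (list of letters). -/
def pword {N : ℕ} (P : Matrix (Fin N) (Fin N) ℝ) (l : List (Fin N)) : ℝ :=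
  ((l.zip l.tail).map fun ab => P ab.1 ab.2).prod

/-- Admissible word: nonempty with positive transition weights. -/
def adm {N : ℕ} (P : Matrix (Fin N) (Fin N) ℝ) (l : List (Fin N)) : Prop :=
  l ≠ [] ∧ l.Chain' fun a b => 0 < P a b

/-- `m_σ = q_{σ_1} p_σ`. -/
def mlist {N : ℕ} (q : Fin N → ℝ) (P : Matrix (Fin N) (Fin N) ℝ)
    (l : List (Fin N)) : ℝ :=
  (l.map q).headI * pword P l

/-- Product of the entries of `A` along a word of length `k+1`. -/
noncomputable def wprod {N k : ℕ} (A : Matrix (Fin N) (Fin N) ℝ)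
    (σ : Fin (k + 1) → Fin N) : ℝ :=
  ∏ t : Fin k, A (σ t.castSucc) (σ t.succ)

/-- `u_k = ∑_{σ ∈ G_k} m_σ log m_σ` (convention `0 log 0 = 0`). -/
noncomputable def useq {N : ℕ} (q : Fin N → ℝ) (P : Matrix (Fin N) (Fin N) ℝ)
    (k : ℕ) : ℝ :=
  ∑ σ : Fin (k - 1 + 1) → Fin N,
    (q (σ 0) * wprod P σ) * Real.log (q (σ 0) * wprod P σ)

/-- `l_k = ∑_{σ ∈ G_k} m_σ log c_σ`. -/
noncomputable def lseq {N : ℕ} (q : Fin N → ℝ) (P c : Matrix (Fin N) (Fin N) ℝ)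
    (k : ℕ) : ℝ :=
  ∑ σ : Fin (k - 1 + 1) → Fin N,
    (q (σ 0) * wprod P σ) * Real.log (wprod c σ)

/-!
Both `t_j` and `s_k` are quotients of the means of `log m_σ` and `log c_σ` over a cut of the word
tree: `Λ_j` in the first case, all words of length `k` in the second. A cut is a bounded stopping
time of the Markov chain with transition matrix `P`. Since `P` is irreducible, the Poisson equation
`f + P h = h + γ` is solvable for every source `f`; it corrects `log A_σ` to a martingale with drift
`γ`, so by optional stopping the mean of `log A_σ` over any cut is `γ` times the mean number of
steps, up to an error depending only on `A`. For `A = c` the maximum principle gives `γ < 0`. Hence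
all these quotients agree up to `O(1 / j)` on cuts whose words have more than `j` letters, such as
`Λ_j` and the words of length `k ≥ k_{1j}`.
-/

section Words

variable {α : Type*}

/-- The finite set of words of length `n` over the alphabet `α`. -/
noncomputable def words (α : Type*) [Finite α] (n : ℕ) : Finset (List α) :=
  (List.finite_length_eq α n).toFinset

@[simp]
theorem mem_words [Finite α] {n : ℕ} {l : List α} : l ∈ words α n ↔ l.length = n := by
  simp [words]

theorem sum_words_eq_sum_ofFn {M : Type*} [AddCommMonoid M] [Fintype α] (n : ℕ)
    (F : List α → M) : ∑ l ∈ words α n, F l = ∑ σ : Fin n → α, F (List.ofFn σ) := by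
  symm
  refine sum_bij (fun σ _ => List.ofFn σ) (fun σ _ => by simp)
    (fun σ _ τ _ h => List.ofFn_injective h) (fun l hl => ?_) (fun _ _ => rfl)
  obtain rfl := mem_words.1 hl
  exact ⟨l.get, mem_univ _, List.ofFn_get l⟩

theorem sum_words_succ {M : Type*} [AddCommMonoid M] [Fintype α] (n : ℕ) (F : List α → M) :
    ∑ l ∈ words α (n + 1), F l = ∑ l ∈ words α n, ∑ b, F (l ++ [b]) := by
  rw [← sum_product']
  symm
  refine sum_bij (fun x _ => x.1 ++ [x.2]) (fun x hx => ?_) (fun x _ y _ h => ?_)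
    (fun l hl => ?_) (fun _ _ => rfl)
  · simpa using hx
  · obtain ⟨h₁, h₂⟩ := List.append_inj' h rfl
    exact Prod.ext h₁ (List.singleton_inj.1 h₂)
  · have hlen := mem_words.1 hl
    have hne : l ≠ [] := by rintro rfl; simp at hlen
    exact ⟨(l.dropLast, l.getLast hne), by simp [hlen], List.dropLast_concat_getLast hne⟩

/-- A function on words is consistent if its value at each nonempty word is the sum of its values
at the one-letter extensions of that word. This is the martingale property of a process `X` along
a random word, written for the function `l ↦ m_l X_l`. -/
def IsConsistent {M : Type*} [AddCommMonoid M] [Fintype α] (Φ : List α → M) : Prop :=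
  ∀ l ≠ [], ∑ b, Φ (l ++ [b]) = Φ l

theorem IsConsistent.sum_words_append {M : Type*} [AddCommMonoid M] [Fintype α]
    {Φ : List α → M} (hΦ : IsConsistent Φ) {l : List α} (hl : l ≠ []) (n : ℕ) :
    ∑ v ∈ words α n, Φ (l ++ v) = Φ l := by
  induction n with
  | zero => simp [sum_words_eq_sum_ofFn]
  | succ n ih =>
    rw [sum_words_succ, ← ih]
    refine sum_congr rfl fun v _ => ?_
    simpa only [List.append_assoc] using hΦ (l ++ v) (by simp [hl])

/-- A cut of depth `n`: a finite set of nonempty words of length at most `n` such that each word of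
length `n` has exactly one initial segment in the set. It encodes a stopping time bounded by `n`. -/
structure IsCut (n : ℕ) (B : Finset (List α)) : Prop where
  ne_nil : ∀ l ∈ B, l ≠ []
  length_le : ∀ l ∈ B, l.length ≤ n
  existsUnique_isPrefix : ∀ w : List α, w.length = n → ∃! l, l ∈ B ∧ l <+: w

theorem isCut_words [Finite α] {k n : ℕ} (hk : 0 < k) (hkn : k ≤ n) : IsCut n (words α k) where
  ne_nil l hl := List.ne_nil_of_length_pos ((mem_words.1 hl).symm ▸ hk)
  length_le l hl := (mem_words.1 hl).trans_le hkn
  existsUnique_isPrefix w hw := by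
    refine ⟨w.take k, ⟨by simp [hw, hkn], ⟨w.drop k, List.take_append_drop k w⟩⟩,
      fun l ⟨hl, hlw⟩ => ?_⟩
    rw [List.prefix_iff_eq_take.1 hlw, mem_words.1 hl]

section Sum

variable {M : Type*} [AddCommMonoid M] [Fintype α] {n : ℕ} {B : Finset (List α)} {Φ : List α → M}

theorem IsCut.sum_eq_sum_words (hB : IsCut n B) (hΦ : IsConsistent Φ) :
    ∑ l ∈ B, Φ l = ∑ w ∈ words α n, Φ w := by
  rw [← sum_congr rfl fun l hl => hΦ.sum_words_append (hB.ne_nil l hl) (n - l.length), sum_sigma']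
  have hlen : ∀ x ∈ B.sigma fun l => words α (n - l.length), (x.1 ++ x.2).length = n := by
    rintro ⟨l, v⟩ hx
    obtain ⟨hl, hv⟩ := mem_sigma.1 hx
    rw [List.length_append, mem_words.1 hv, Nat.add_sub_of_le (hB.length_le l hl)]
  refine sum_bij (fun x _ => x.1 ++ x.2) (fun x hx => mem_words.2 (hlen x hx)) ?_ ?_
    (fun _ _ => rfl)
  · rintro ⟨l, v⟩ hx ⟨l', v'⟩ hx' (h : l ++ v = l' ++ v')
    obtain rfl : l = l' := (hB.existsUnique_isPrefix _ (hlen _ hx)).unique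
      ⟨(mem_sigma.1 hx).1, l.prefix_append v⟩ ⟨(mem_sigma.1 hx').1, h ▸ l'.prefix_append v'⟩
    rw [List.append_cancel_left h]
  · intro w hw
    obtain ⟨l, ⟨hl, v, rfl⟩, -⟩ := hB.existsUnique_isPrefix w (mem_words.1 hw)
    exact ⟨⟨l, v⟩, by simp [hl, ← mem_words.1 hw], rfl⟩

theorem IsCut.sum_eq (hB : IsCut n B) (hΦ : IsConsistent Φ) : ∑ l ∈ B, Φ l = ∑ a, Φ [a] := by
  rcases Nat.eq_zero_or_pos n with rfl | hn
  · obtain ⟨l, ⟨hl, hnil⟩, -⟩ := hB.existsUnique_isPrefix [] rfl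
    exact absurd (List.prefix_nil.1 hnil) (hB.ne_nil l hl)
  · rw [hB.sum_eq_sum_words hΦ, ← (isCut_words Nat.one_pos hn).sum_eq_sum_words hΦ]
    simp [sum_words_succ, sum_words_eq_sum_ofFn 0]

end Sum

open Classical in
/-- The words at which a random word is stopped when it is followed as long as it satisfies the
predicate `S`, but for at most `n` letters. -/
noncomputable def stoppedWords [Finite α] (S : List α → Prop) (n : ℕ) : Finset (List α) :=
  (List.finite_length_le α n).toFinset.filter
    fun l => l ≠ [] ∧ S l.dropLast ∧ (S l → l.length = n)

theorem mem_stoppedWords [Finite α] {S : List α → Prop} {n : ℕ} {l : List α} :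
    l ∈ stoppedWords S n ↔ l.length ≤ n ∧ l ≠ [] ∧ S l.dropLast ∧ (S l → l.length = n) := by
  simp [stoppedWords]

theorem exists_isPrefix_stopped {S : List α → Prop} (h_nil : S []) {w : List α}
    (hw : w ≠ []) : ∃ l, l <+: w ∧ l ≠ [] ∧ S l.dropLast ∧ (S l → l = w) := by
  induction w using List.reverseRecOn with
  | nil => exact absurd rfl hw
  | append_singleton w b ih =>
    by_cases hSw : S w
    · exact ⟨w ++ [b], List.prefix_rfl, by simp, by simpa using hSw, fun _ => rfl⟩
    · obtain ⟨l, hlw, hl, hSl, hS⟩ := ih (by rintro rfl; exact hSw h_nil)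
      exact ⟨l, hlw.trans (w.prefix_append [b]), hl, hSl, fun h => absurd (hS h ▸ h) hSw⟩

theorem isCut_stoppedWords [Finite α] {S : List α → Prop} (h_nil : S [])
    (hS_anti : ∀ l l', l <+: l' → S l' → S l) {n : ℕ} (hn : 0 < n) :
    IsCut n (stoppedWords S n) where
  ne_nil l hl := (mem_stoppedWords.1 hl).2.1
  length_le l hl := (mem_stoppedWords.1 hl).1
  existsUnique_isPrefix w hw := by
    obtain ⟨l, hlw, hl, hSl, hS⟩ := exists_isPrefix_stopped h_nil
      (List.ne_nil_of_length_pos (hw.symm ▸ hn))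
    have eq_of_isPrefix : ∀ l₁ ∈ stoppedWords S n, ∀ l₂ ∈ stoppedWords S n,
        l₁ <+: l₂ → l₁ = l₂ := by
      intro l₁ h₁ l₂ h₂ hle
      obtain ⟨-, -, -, hS₁⟩ := mem_stoppedWords.1 h₁
      obtain ⟨hn₂, hl₂, hS₂, -⟩ := mem_stoppedWords.1 h₂
      rw [← List.dropLast_concat_getLast hl₂, List.prefix_concat_iff,
        List.dropLast_concat_getLast hl₂] at hle
      rcases hle with rfl | hle
      · rfl
      · have := hle.length_le
        have := hS₁ (hS_anti _ _ hle hS₂)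
        have := List.length_pos_of_ne_nil hl₂
        grind
    have hmem : l ∈ stoppedWords S n :=
      mem_stoppedWords.2 ⟨hw ▸ hlw.length_le, hl, hSl, fun h => by rw [hS h, hw]⟩
    refine ⟨l, ⟨hmem, hlw⟩, fun l' ⟨hl', hlw'⟩ => ?_⟩
    rcases le_total l.length l'.length with hle | hle
    · exact (eq_of_isPrefix l hmem l' hl' (List.prefix_of_prefix_length_le hlw hlw' hle)).symm
    · exact eq_of_isPrefix l' hl' l hmem (List.prefix_of_prefix_length_le hlw' hlw hle)

end Words

open Matrix

section Poisson

variable {ι : Type*} [Fintype ι]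

/-- The Poisson equation of the Markov chain `P` with source `f`: a solution `h` corrects the
additive functional of `f` to a martingale with drift `γ`. -/
def SolvesPoisson (P : Matrix ι ι ℝ) (f h : ι → ℝ) (γ : ℝ) : Prop :=
  ∀ i, f i + (P *ᵥ h) i = h i + γ

theorem SolvesPoisson.neg {P : Matrix ι ι ℝ} {f h : ι → ℝ} {γ : ℝ} (hh : SolvesPoisson P f h γ) :
    SolvesPoisson P (-f) (-h) (-γ) := fun i => by
  simp only [mulVec_neg, Pi.neg_apply]
  linarith [hh i]

variable [DecidableEq ι] {P : Matrix ι ι ℝ}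

theorem le_pow_mulVec (hP : P ∈ rowStochastic ℝ ι) {h : ι → ℝ} (hh : h ≤ P *ᵥ h) (m : ℕ) :
    h ≤ P ^ m *ᵥ h := by
  induction m with
  | zero => simp
  | succ m ih =>
    have hmono : P *ᵥ h ≤ P *ᵥ (P ^ m *ᵥ h) := fun i =>
      dotProduct_le_dotProduct_of_nonneg_left ih fun _ => hP.1 _ _
    rw [pow_succ', ← mulVec_mulVec]
    exact hh.trans hmono

theorem rowStochastic_mulVec_apply_of_const (hP : P ∈ rowStochastic ℝ ι) {h : ι → ℝ}
    (hh : ∀ i j, h i = h j) (i : ι) : (P *ᵥ h) i = h i := by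
  simp only [mulVec, dotProduct, hh _ i, ← sum_mul, sum_row_of_mem_rowStochastic hP, one_mul]

theorem eq_of_le_mulVec (hP : P ∈ rowStochastic ℝ ι) (hirr : P.IsIrreducible)
    {h : ι → ℝ} (hh : h ≤ P *ᵥ h) (i j : ι) : h i = h j := by
  obtain ⟨z, hz⟩ := @Finite.exists_max _ _ _ ⟨i⟩ _ h
  suffices h_eq : ∀ w, h w = h z by rw [h_eq i, h_eq j]
  intro w
  obtain ⟨m, -, hm⟩ := (isIrreducible_iff_exists_pow_pos hP.1).1 hirr z w
  have hPm : P ^ m ∈ rowStochastic ℝ ι := pow_mem hP m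
  have h_nonneg : ∀ j ∈ univ, 0 ≤ (P ^ m) z j * (h z - h j) := fun j _ =>
    mul_nonneg (hPm.1 z j) (sub_nonneg.2 (hz j))
  have h_sum : ∑ j, (P ^ m) z j * (h z - h j) ≤ 0 := by
    have : h z ≤ ∑ j, (P ^ m) z j * h j := le_pow_mulVec hP hh m z
    simpa only [mul_sub, sum_sub_distrib, ← sum_mul, sum_row_of_mem_rowStochastic hPm, one_mul,
      sub_nonpos] using this
  have h_zero : (P ^ m) z w * (h z - h w) = 0 :=
    (sum_eq_zero_iff_of_nonneg h_nonneg).1 (h_sum.antisymm (sum_nonneg h_nonneg)) w (mem_univ w)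
  linarith [(mul_eq_zero.1 h_zero).resolve_left hm.ne']

theorem SolvesPoisson.const_of_le (hP : P ∈ rowStochastic ℝ ι) (hirr : P.IsIrreducible)
    {f h : ι → ℝ} {γ : ℝ} (hh : SolvesPoisson P f h γ) (hf : ∀ i, f i ≤ γ) :
    (∀ i j, h i = h j) ∧ ∀ i, f i = γ := by
  have hconst : ∀ i j, h i = h j :=
    eq_of_le_mulVec hP hirr fun i => by linarith [hh i, hf i]
  exact ⟨hconst, fun i => by linarith [hh i, rowStochastic_mulVec_apply_of_const hP hconst i]⟩

theorem SolvesPoisson.neg_of_nonpos (hP : P ∈ rowStochastic ℝ ι) (hirr : P.IsIrreducible)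
    {f h : ι → ℝ} {γ : ℝ} (hh : SolvesPoisson P f h γ) (hf : ∀ i, f i ≤ 0) {i₀ : ι}
    (hi₀ : f i₀ < 0) : γ < 0 := by
  by_contra! hγ
  linarith [(hh.const_of_le hP hirr fun i => (hf i).trans hγ).2 i₀]

theorem SolvesPoisson.const_of_zero (hP : P ∈ rowStochastic ℝ ι) (hirr : P.IsIrreducible)
    {h : ι → ℝ} {γ : ℝ} (hh : SolvesPoisson P 0 h γ) (i : ι) : (∀ j, h j = h i) ∧ γ = 0 := by
  rcases le_total 0 γ with hγ | hγ
  · obtain ⟨hconst, hzero⟩ := hh.const_of_le hP hirr fun _ => hγ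
    exact ⟨fun j => hconst j i, (hzero i).symm⟩
  · obtain ⟨hconst, hzero⟩ := hh.neg.const_of_le hP hirr fun _ => by simpa using hγ
    exact ⟨fun j => neg_injective (hconst j i), by simpa using (hzero i).symm⟩

theorem exists_solvesPoisson [Nonempty ι] (hP : P ∈ rowStochastic ℝ ι) (hirr : P.IsIrreducible)
    (f : ι → ℝ) : ∃ h γ, SolvesPoisson P f h γ := by
  obtain ⟨i₀⟩ := ‹Nonempty ι›
  -- Adding the value at `i₀` makes `1 - P` injective: its kernel consists of the constants.
  let T : (ι → ℝ) →ₗ[ℝ] ι → ℝ :=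
    LinearMap.id - P.mulVecLin + (LinearMap.proj i₀).smulRight (1 : ι → ℝ)
  have T_apply : ∀ h i, T h i = h i - (P *ᵥ h) i + h i₀ := fun h i => by simp [T]
  have T_injective : Function.Injective T := by
    rw [injective_iff_map_eq_zero]
    intro h hT
    have hh : SolvesPoisson P 0 h (h i₀) := fun i => by
      have := T_apply h i
      simp only [hT, Pi.zero_apply] at this ⊢
      linarith
    obtain ⟨hconst, hzero⟩ := hh.const_of_zero hP hirr i₀
    exact funext fun i => (hconst i).trans hzero
  obtain ⟨h, rfl⟩ := LinearMap.injective_iff_surjective.1 T_injective f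
  exact ⟨h, h i₀, fun i => by rw [T_apply]; ring⟩

end Poisson

section Drift

variable {ι : Type*} [Fintype ι] {P A : Matrix ι ι ℝ}

/-- The conditional expectation of `log A_{ij}` for a transition from `i` with law `P_{i·}`. -/
noncomputable def logDrift (P A : Matrix ι ι ℝ) (i : ι) : ℝ :=
  ∑ j, P i j * Real.log (A i j)

theorem mul_log_nonpos {p a : ℝ} (hp : 0 ≤ p) (ha : 0 < p → 0 < a ∧ a ≤ 1) :
    p * Real.log a ≤ 0 := by
  rcases hp.eq_or_lt with rfl | hp_pos
  · simp
  · exact mul_nonpos_of_nonneg_of_nonpos hp (Real.log_nonpos (ha hp_pos).1.le (ha hp_pos).2)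

theorem logDrift_nonpos (hP : ∀ i j, 0 ≤ P i j)
    (hA : ∀ i j, 0 < P i j → 0 < A i j ∧ A i j ≤ 1) (i : ι) : logDrift P A i ≤ 0 :=
  sum_nonpos fun j _ => mul_log_nonpos (hP i j) (hA i j)

theorem logDrift_neg (hP : ∀ i j, 0 ≤ P i j)
    (hA : ∀ i j, 0 < P i j → 0 < A i j ∧ A i j ≤ 1) {i j : ι} (hij : 0 < P i j)
    (hAij : A i j < 1) : logDrift P A i < 0 :=
  sum_neg' (fun k _ => mul_log_nonpos (hP i k) (hA i k))
    ⟨j, mem_univ j, mul_neg_of_pos_of_neg hij (Real.log_neg (hA i j hij).1 hAij)⟩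

end Drift

theorem abs_sum_mul_le_of_sum_eq_one {ι : Type*} {s : Finset ι} {w x : ι → ℝ} {K : ℝ}
    (hw : ∀ i ∈ s, 0 ≤ w i) (hw1 : ∑ i ∈ s, w i = 1) (hx : ∀ i ∈ s, |x i| ≤ K) :
    |∑ i ∈ s, w i * x i| ≤ K := by
  simpa using (convex_closedBall (0 : ℝ) K).sum_mem hw hw1 fun i hi => by simpa using hx i hi

section Transition

variable {N : ℕ} {P A : Matrix (Fin N) (Fin N) ℝ} {q : Fin N → ℝ}

theorem pword_singleton (P : Matrix (Fin N) (Fin N) ℝ) (a : Fin N) : pword P [a] = 1 := by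
  simp [pword]

theorem pword_cons_cons (P : Matrix (Fin N) (Fin N) ℝ) (a b : Fin N) (l : List (Fin N)) :
    pword P (a :: b :: l) = P a b * pword P (b :: l) := by
  simp [pword]

theorem pword_concat (P : Matrix (Fin N) (Fin N) ℝ) {l : List (Fin N)} (hl : l ≠ []) (b : Fin N) :
    pword P (l ++ [b]) = pword P l * P (l.getLast hl) b := by
  induction l with
  | nil => exact absurd rfl hl
  | cons x l ih =>
    cases l with
    | nil => simp [pword]
    | cons y l =>
      simp only [List.cons_append] at ih ⊢
      rw [pword_cons_cons, pword_cons_cons, ih (by simp), mul_assoc, List.getLast_cons_cons]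

theorem pword_ofFn (A : Matrix (Fin N) (Fin N) ℝ) {k : ℕ} (σ : Fin (k + 1) → Fin N) :
    pword A (List.ofFn σ) = wprod A σ := by
  induction k with
  | zero => simp [wprod, pword]
  | succ k ih =>
    have h_tail := ih fun i => σ i.succ
    rw [List.ofFn_succ] at h_tail
    rw [List.ofFn_succ, List.ofFn_succ, pword_cons_cons, h_tail]
    simp [wprod, Fin.prod_univ_succ]

theorem mlist_ofFn (q : Fin N → ℝ) (A : Matrix (Fin N) (Fin N) ℝ) {k : ℕ}
    (σ : Fin (k + 1) → Fin N) : mlist q A (List.ofFn σ) = q (σ 0) * wprod A σ := by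
  rw [← pword_ofFn]
  simp [mlist, List.ofFn_succ]

theorem pword_nonneg (hP : ∀ i j, 0 ≤ P i j) (l : List (Fin N)) : 0 ≤ pword P l :=
  List.prod_nonneg <| List.forall_mem_map.2 fun x _ => hP x.1 x.2

theorem pword_le_of_isPrefix (hP : P ∈ rowStochastic ℝ (Fin N)) {l l' : List (Fin N)}
    (h : l <+: l') : pword P l' ≤ pword P l := by
  obtain ⟨v, rfl⟩ := h
  induction v using List.reverseRecOn with
  | nil => simp
  | append_singleton v b ih =>
    rw [← List.append_assoc]
    rcases eq_or_ne (l ++ v) [] with h_nil | h_ne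
    · obtain ⟨rfl, rfl⟩ := List.append_eq_nil_iff.1 h_nil
      simp [pword]
    · rw [pword_concat P h_ne]
      exact (mul_le_of_le_one_right (pword_nonneg hP.1 _) (le_one_of_mem_rowStochastic hP)).trans ih

theorem pword_le_one (hP : P ∈ rowStochastic ℝ (Fin N)) (l : List (Fin N)) : pword P l ≤ 1 := by
  simpa [pword] using pword_le_of_isPrefix hP ⟨l, List.nil_append l⟩

theorem adm_iff_pword_ne_zero (hP : ∀ i j, 0 ≤ P i j) {l : List (Fin N)} (hl : l ≠ []) :
    adm P l ↔ pword P l ≠ 0 := by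
  rw [adm, and_iff_right hl]
  change l.IsChain _ ↔ _
  induction l with
  | nil => exact absurd rfl hl
  | cons a l ih =>
    cases l with
    | nil => simp [pword_singleton]
    | cons b l =>
      rw [List.isChain_cons_cons, ih (by simp), pword_cons_cons, mul_ne_zero_iff,
        (hP a b).lt_iff_ne']

theorem pword_ne_zero_of_support_subset (hA : ∀ i j, P i j ≠ 0 → A i j ≠ 0) {l : List (Fin N)}
    (hl : pword P l ≠ 0) : pword A l ≠ 0 := by
  simp only [pword, ne_eq, List.prod_eq_zero_iff, List.mem_map, not_exists, not_and] at hl ⊢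
  exact fun x hx => hA _ _ (hl x hx)

theorem pow_length_sub_one_le_pword {r : ℝ} (hr : 0 ≤ r) (hP : ∀ i j, 0 < P i j → r ≤ P i j)
    {l : List (Fin N)} (hl : adm P l) : r ^ (l.length - 1) ≤ pword P l := by
  obtain ⟨h_ne, h_chain⟩ := hl
  change l.IsChain _ at h_chain
  induction l with
  | nil => exact absurd rfl h_ne
  | cons a l ih =>
    cases l with
    | nil => simp [pword_singleton]
    | cons b l =>
      obtain ⟨hab, h_tail⟩ := List.isChain_cons_cons.1 h_chain
      simpa only [pword_cons_cons, List.length_cons, Nat.add_sub_cancel, pow_succ'] using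
        mul_le_mul (hP a b hab) (ih (by simp) h_tail) (pow_nonneg hr _) (hr.trans (hP a b hab))

theorem mlist_concat (q : Fin N → ℝ) (P : Matrix (Fin N) (Fin N) ℝ) {l : List (Fin N)}
    (hl : l ≠ []) (b : Fin N) : mlist q P (l ++ [b]) = mlist q P l * P (l.getLast hl) b := by
  rw [mlist, mlist, pword_concat P hl, mul_assoc]
  cases l with
  | nil => exact absurd rfl hl
  | cons a l => rfl

theorem mlist_nonneg (hP : ∀ i j, 0 ≤ P i j) (hq : ∀ i, 0 ≤ q i) (l : List (Fin N)) :
    0 ≤ mlist q P l := by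
  refine mul_nonneg ?_ (pword_nonneg hP l)
  cases l with
  | nil => exact le_rfl
  | cons a l => exact hq a

theorem isConsistent_mlist (hP : P ∈ rowStochastic ℝ (Fin N)) (q : Fin N → ℝ) :
    IsConsistent (mlist q P) := fun l hl => by
  simp only [mlist_concat q P hl, ← mul_sum, sum_row_of_mem_rowStochastic hP, mul_one]

/-- The value at the word `l` of the martingale that a solution `h`, `γ` of the Poisson equation
with source `logDrift P A` attaches to `log A_l`; `|l| - 1` is the number of transitions. -/
noncomputable def poissonMartingale (A : Matrix (Fin N) (Fin N) ℝ) (h : Fin N → ℝ) (γ : ℝ)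
    (l : List (Fin N)) : ℝ :=
  Real.log (pword A l) + l.getLast?.elim 0 h - γ * ((l.length : ℝ) - 1)

theorem isConsistent_mlist_mul_poissonMartingale (hP : P ∈ rowStochastic ℝ (Fin N)) (q : Fin N → ℝ)
    (hA : ∀ i j, P i j ≠ 0 → A i j ≠ 0) {h : Fin N → ℝ} {γ : ℝ}
    (hh : SolvesPoisson P (logDrift P A) h γ) :
    IsConsistent fun l => mlist q P l * poissonMartingale A h γ l := fun l hl => by
  set a := l.getLast hl with ha
  have h_last : l.getLast?.elim 0 h = h a := by simp [List.getLast?_eq_some_getLast hl, ha]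
  by_cases hm : mlist q P l = 0
  · simp [mlist_concat q P hl, hm]
  have h_log : ∀ b, P a b * Real.log (pword A (l ++ [b])) =
      P a b * (Real.log (pword A l) + Real.log (A a b)) := fun b => by
    by_cases hab : P a b = 0
    · simp [hab]
    · rw [pword_concat A hl, Real.log_mul (pword_ne_zero_of_support_subset hA
        (right_ne_zero_of_mul hm)) (hA a b hab)]
  calc ∑ b, mlist q P (l ++ [b]) * poissonMartingale A h γ (l ++ [b])
      = ∑ b, mlist q P l * (P a b * (Real.log (pword A l) - γ * l.length) +
          (P a b * Real.log (A a b) + P a b * h b)) := sum_congr rfl fun b _ => by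
        simp only [mlist_concat q P hl, poissonMartingale, List.getLast?_concat, Option.elim_some,
          List.length_append, List.length_singleton, Nat.cast_add, Nat.cast_one]
        linear_combination mlist q P l * h_log b
    _ = mlist q P l * (Real.log (pword A l) - γ * l.length +
          (logDrift P A a + (P *ᵥ h) a)) := by
        rw [← mul_sum, sum_add_distrib, sum_add_distrib, ← sum_mul,
          sum_row_of_mem_rowStochastic hP, one_mul]
        rfl
    _ = mlist q P l * poissonMartingale A h γ l := by
        rw [hh a, poissonMartingale, h_last]
        ring

variable {n : ℕ} {B : Finset (List (Fin N))}

theorem IsCut.sum_mlist (hB : IsCut n B) (hP : P ∈ rowStochastic ℝ (Fin N))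
    (hq1 : ∑ i, q i = 1) : ∑ l ∈ B, mlist q P l = 1 := by
  rw [hB.sum_eq (isConsistent_mlist hP q)]
  simpa [mlist, pword_singleton] using hq1

/-- The mean number of transitions before stopping at a word of `B`. -/
noncomputable def meanSteps (q : Fin N → ℝ) (P : Matrix (Fin N) (Fin N) ℝ)
    (B : Finset (List (Fin N))) : ℝ :=
  ∑ l ∈ B, mlist q P l * ((l.length : ℝ) - 1)

theorem IsCut.le_meanSteps (hB : IsCut n B) (hP : P ∈ rowStochastic ℝ (Fin N))
    (hq : ∀ i, 0 ≤ q i) (hq1 : ∑ i, q i = 1) {j : ℕ}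
    (hj : ∀ l ∈ B, mlist q P l ≠ 0 → j < l.length) : (j : ℝ) ≤ meanSteps q P B := by
  calc (j : ℝ) = ∑ l ∈ B, mlist q P l * j := by rw [← sum_mul, hB.sum_mlist hP hq1, one_mul]
    _ ≤ meanSteps q P B := sum_le_sum fun l hl => by
        by_cases hm : mlist q P l = 0
        · simp [hm]
        · have : (j : ℝ) + 1 ≤ l.length := by exact_mod_cast hj l hl hm
          exact mul_le_mul_of_nonneg_left (by linarith) (mlist_nonneg hP.1 hq l)

theorem IsCut.mlist_mul_le_meanSteps (hB : IsCut n B) (hP : ∀ i j, 0 ≤ P i j)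
    (hq : ∀ i, 0 ≤ q i) {w : List (Fin N)} (hw : w ∈ B) :
    mlist q P w * ((w.length : ℝ) - 1) ≤ meanSteps q P B := by
  refine single_le_sum (f := fun l : List (Fin N) => mlist q P l * ((l.length : ℝ) - 1))
    (fun l hl => mul_nonneg (mlist_nonneg hP hq l) ?_) hw
  have : 1 ≤ l.length := List.length_pos_of_ne_nil (hB.ne_nil l hl)
  exact sub_nonneg.2 (by exact_mod_cast this)

theorem IsCut.abs_sum_log_pword_sub_le (hB : IsCut n B) (hP : P ∈ rowStochastic ℝ (Fin N))
    (hq : ∀ i, 0 ≤ q i) (hq1 : ∑ i, q i = 1) (hA : ∀ i j, P i j ≠ 0 → A i j ≠ 0)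
    {h : Fin N → ℝ} {γ : ℝ} (hh : SolvesPoisson P (logDrift P A) h γ) :
    |∑ l ∈ B, mlist q P l * Real.log (pword A l) - γ * meanSteps q P B| ≤ 2 * ‖h‖ := by
  have h_stop : ∑ l ∈ B, mlist q P l * Real.log (pword A l) - γ * meanSteps q P B +
      ∑ l ∈ B, mlist q P l * l.getLast?.elim 0 h = ∑ a, q a * h a := by
    calc _ = ∑ l ∈ B, mlist q P l * poissonMartingale A h γ l := by
          rw [meanSteps, mul_sum, ← sum_sub_distrib, ← sum_add_distrib]
          exact sum_congr rfl fun l _ => by rw [poissonMartingale]; ring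
      _ = ∑ a, q a * h a := by
          rw [hB.sum_eq (isConsistent_mlist_mul_poissonMartingale hP q hA hh)]
          simp [mlist, poissonMartingale, pword_singleton]
  have h_init : |∑ a, q a * h a| ≤ ‖h‖ :=
    abs_sum_mul_le_of_sum_eq_one (fun a _ => hq a) hq1 fun a _ => norm_le_pi_norm h a
  have h_final : |∑ l ∈ B, mlist q P l * l.getLast?.elim 0 h| ≤ ‖h‖ :=
    abs_sum_mul_le_of_sum_eq_one (fun l _ => mlist_nonneg hP.1 hq l) (hB.sum_mlist hP hq1)
      fun l hl => by
        rw [List.getLast?_eq_some_getLast (hB.ne_nil l hl)]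
        exact norm_le_pi_norm h _
  rw [eq_sub_of_add_eq h_stop, two_mul]
  exact (abs_sub _ _).trans (add_le_add h_init h_final)

theorem mlist_mul_log_mlist (q : Fin N → ℝ) (P : Matrix (Fin N) (Fin N) ℝ) (l : List (Fin N)) :
    mlist q P l * Real.log (mlist q P l) = mlist q P l * Real.log (pword P l) +
      mlist q P l * Real.log (l.map q).headI := by
  by_cases hm : mlist q P l = 0
  · simp [hm]
  · rw [← mul_add, add_comm, ← Real.log_mul (left_ne_zero_of_mul hm) (right_ne_zero_of_mul hm),
      mlist]

theorem IsCut.abs_sum_log_mlist_sub_le (hB : IsCut n B) (hP : P ∈ rowStochastic ℝ (Fin N))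
    (hq : ∀ i, 0 ≤ q i) (hq1 : ∑ i, q i = 1)
    {h : Fin N → ℝ} {γ : ℝ} (hh : SolvesPoisson P (logDrift P P) h γ) :
    |∑ l ∈ B, mlist q P l * Real.log (mlist q P l) - γ * meanSteps q P B| ≤
      2 * ‖h‖ + ‖fun i => Real.log (q i)‖ := by
  have h_init : |∑ l ∈ B, mlist q P l * Real.log (l.map q).headI| ≤ ‖fun i => Real.log (q i)‖ :=
    abs_sum_mul_le_of_sum_eq_one (fun l _ => mlist_nonneg hP.1 hq l) (hB.sum_mlist hP hq1)
      fun l hl => by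
        obtain ⟨a, l, rfl⟩ := List.exists_cons_of_ne_nil (hB.ne_nil l hl)
        exact norm_le_pi_norm (fun i => Real.log (q i)) a
  simp only [mlist_mul_log_mlist, sum_add_distrib, add_sub_right_comm]
  exact (abs_add_le _ _).trans (add_le_add
    (hB.abs_sum_log_pword_sub_le hP hq hq1 (fun _ _ => id) hh) h_init)

end Transition

section Ratio

theorem abs_div_sub_div_le {γ μ C T u v : ℝ} (hμ : μ ≠ 0) (hT : 0 < T) (hu : |u - γ * T| ≤ C)
    (hv : |v - μ * T| ≤ C) (hC : 2 * C ≤ |μ| * T) :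
    |u / v - γ / μ| ≤ 2 * C * (|μ| + |γ|) / μ ^ 2 / T := by
  have : 0 < |μ| := abs_pos.2 hμ
  have hC_nonneg : 0 ≤ C := (abs_nonneg _).trans hu
  have hv_large : |μ| * T / 2 ≤ |v| := by
    have h_abs : |μ * T| ≤ |v| + |v - μ * T| := by
      simpa using abs_sub v (v - μ * T)
    rw [abs_mul, abs_of_pos hT] at h_abs
    linarith
  have hv_ne : v ≠ 0 := abs_pos.1 (lt_of_lt_of_le (by positivity) hv_large)
  have h_num : |(u - γ * T) * μ - γ * (v - μ * T)| ≤ C * (|μ| + |γ|) := by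
    calc _ ≤ |u - γ * T| * |μ| + |γ| * |v - μ * T| := by
          simpa only [abs_mul] using abs_sub ((u - γ * T) * μ) (γ * (v - μ * T))
      _ ≤ C * |μ| + |γ| * C := by gcongr
      _ = C * (|μ| + |γ|) := by ring
  calc |u / v - γ / μ| = |(u - γ * T) * μ - γ * (v - μ * T)| / (|v| * |μ|) := by
        rw [← abs_mul, ← abs_div]
        congr 1
        field_simp
        ring
    _ ≤ C * (|μ| + |γ|) / (|μ| * T / 2 * |μ|) := by gcongr
    _ = 2 * C * (|μ| + |γ|) / μ ^ 2 / T := by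
        rw [← sq_abs μ]
        field_simp

variable {N n : ℕ} {P c : Matrix (Fin N) (Fin N) ℝ} {q : Fin N → ℝ}

/-- The quotient `(∑_{σ ∈ B} m_σ log m_σ) / (∑_{σ ∈ B} m_σ log c_σ)`, which is `t_j` for the cut
`Λ_j` and `s_k` for the cut formed by all words of length `k`. -/
noncomputable def logRatio (q : Fin N → ℝ) (P c : Matrix (Fin N) (Fin N) ℝ)
    (B : Finset (List (Fin N))) : ℝ :=
  (∑ l ∈ B, mlist q P l * Real.log (mlist q P l)) / ∑ l ∈ B, mlist q P l * Real.log (pword c l)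

theorem logRatio_words (q : Fin N → ℝ) (P c : Matrix (Fin N) (Fin N) ℝ) {k : ℕ} (hk : 0 < k) :
    logRatio q P c (words (Fin N) k) = useq q P k / lseq q P c k := by
  obtain ⟨k, rfl⟩ := Nat.exists_eq_succ_of_ne_zero hk.ne'
  simp only [logRatio, useq, lseq, sum_words_eq_sum_ofFn, Nat.succ_eq_add_one, mlist_ofFn,
    pword_ofFn]
  rfl

theorem exists_abs_logRatio_sub_le [NeZero N] (hP : P ∈ rowStochastic ℝ (Fin N))
    (hirr : P.IsIrreducible) (hc : ∀ i j, 0 < P i j → 0 < c i j ∧ c i j ≤ 1)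
    (hc_lt : ∃ i j, 0 < P i j ∧ c i j < 1) (hq : ∀ i, 0 ≤ q i) (hq1 : ∑ i, q i = 1) :
    ∃ (ρ D : ℝ) (J : ℕ), ∀ j ≥ J, ∀ n B, IsCut n B → (∀ l ∈ B, mlist q P l ≠ 0 → j < l.length) →
      |logRatio q P c B - ρ| ≤ D / j := by
  obtain ⟨h, γ, hh⟩ := exists_solvesPoisson hP hirr (logDrift P P)
  obtain ⟨g, μ, hg⟩ := exists_solvesPoisson hP hirr (logDrift P c)
  have hμ : μ < 0 := by
    obtain ⟨i, j, hij, hcij⟩ := hc_lt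
    exact hg.neg_of_nonpos hP hirr (logDrift_nonpos hP.1 hc) (logDrift_neg hP.1 hc hij hcij)
  have hc_ne : ∀ i j, P i j ≠ 0 → c i j ≠ 0 := fun i j hij =>
    (hc i j ((hP.1 i j).lt_of_ne' hij)).1.ne'
  set C := max (2 * ‖h‖ + ‖fun i => Real.log (q i)‖) (2 * ‖g‖)
  obtain ⟨J, hJ⟩ := exists_nat_ge (2 * C / |μ|)
  refine ⟨γ / μ, 2 * C * (|μ| + |γ|) / μ ^ 2, J + 1, fun j hj n B hB hlen => ?_⟩
  have hj_pos : (0 : ℝ) < j := by exact_mod_cast Nat.zero_lt_of_lt hj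
  have hjT : (j : ℝ) ≤ meanSteps q P B := hB.le_meanSteps hP hq hq1 hlen
  have hC_large : 2 * C ≤ |μ| * meanSteps q P B := by
    have hJj : (J : ℝ) ≤ j := by exact_mod_cast Nat.le_of_succ_le hj
    rw [← div_le_iff₀' (abs_pos.2 hμ.ne)]
    linarith
  have : 0 ≤ C := le_max_of_le_right (by positivity)
  calc |logRatio q P c B - γ / μ|
      ≤ 2 * C * (|μ| + |γ|) / μ ^ 2 / meanSteps q P B :=
        abs_div_sub_div_le hμ.ne (hj_pos.trans_le hjT)
          ((hB.abs_sum_log_mlist_sub_le hP hq hq1 hh).trans (le_max_left _ _))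
          ((hB.abs_sum_log_pword_sub_le hP hq hq1 hc_ne hg).trans (le_max_right _ _)) hC_large
    _ ≤ 2 * C * (|μ| + |γ|) / μ ^ 2 / j := by gcongr

end Ratio

section FirstPassage

variable {N : ℕ} {P : Matrix (Fin N) (Fin N) ℝ} {q : Fin N → ℝ} {r θ : ℝ}

/-- The admissible words at which `p` first falls below the level `θ`; the paper's `Λ_j` is the
case `θ = p̲ ^ j`. -/
def firstPassage (P : Matrix (Fin N) (Fin N) ℝ) (θ : ℝ) : Set (List (Fin N)) :=
  {l | adm P l ∧ θ ≤ pword P l.dropLast ∧ pword P l < θ}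

theorem lt_length_of_mem_firstPassage (hr₀ : 0 ≤ r) (hr₁ : r ≤ 1)
    (hr : ∀ i j, 0 < P i j → r ≤ P i j) {j : ℕ} {l : List (Fin N)}
    (hl : l ∈ firstPassage P (r ^ j)) : j < l.length := by
  by_contra! hlen
  have : r ^ j ≤ pword P l := (pow_le_pow_of_le_one hr₀ hr₁ (by lia)).trans
    (pow_length_sub_one_le_pword hr₀ hr hl.1)
  exact this.not_gt hl.2.2

theorem firstPassage_one_eq_empty (hP : ∀ i j, 0 < P i j → 1 ≤ P i j) :
    firstPassage P 1 = ∅ :=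
  Set.eq_empty_of_forall_notMem fun l hl => hl.2.2.not_ge <| by
    simpa using pow_length_sub_one_le_pword zero_le_one hP hl.1

theorem isCut_stoppedWords_le_pword (hP : P ∈ rowStochastic ℝ (Fin N)) (hθ : θ ≤ 1) {n : ℕ}
    (hn : 0 < n) : IsCut n (stoppedWords (fun l => θ ≤ pword P l) n) :=
  isCut_stoppedWords (by simpa [pword] using hθ)
    (fun _ _ hl h => h.trans (pword_le_of_isPrefix hP hl)) hn

theorem mul_le_pword_of_le_pword_dropLast (hr₀ : 0 ≤ r) (hr₁ : r ≤ 1)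
    (hr : ∀ i j, 0 < P i j → r ≤ P i j) (hP : ∀ i j, 0 ≤ P i j) (hθ : θ ≤ 1)
    {l : List (Fin N)} (hl : adm P l) (h : θ ≤ pword P l.dropLast) : θ * r ≤ pword P l := by
  obtain ⟨l, b, rfl⟩ := (List.eq_nil_or_concat l).resolve_left hl.1
  rw [List.concat_eq_append] at hl h ⊢
  rw [List.dropLast_concat] at h
  rcases eq_or_ne l [] with rfl | hne
  · simpa [pword_singleton] using mul_le_one₀ hθ hr₀ hr₁
  · have hpos := (adm_iff_pword_ne_zero hP hl.1).1 hl
    rw [pword_concat P hne] at hpos ⊢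
    exact mul_le_mul h (hr _ _ ((hP _ _).lt_of_ne' (right_ne_zero_of_mul hpos))) hr₀
      (pword_nonneg hP l)

theorem abs_log_pword_le (hP : P ∈ rowStochastic ℝ (Fin N)) (hr₀ : 0 < r) (hr₁ : r ≤ 1)
    (hr : ∀ i j, 0 < P i j → r ≤ P i j) (hθ₀ : 0 < θ) (hθ₁ : θ ≤ 1) {l : List (Fin N)}
    (hl : l ≠ []) (h : θ ≤ pword P l.dropLast) :
    |Real.log (pword P l)| ≤ -Real.log (θ * r) := by
  by_cases hpl : pword P l = 0
  · simpa [hpl] using Real.log_nonpos (by positivity) (mul_le_one₀ hθ₁ hr₀.le hr₁)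
  · have h_lower := mul_le_pword_of_le_pword_dropLast hr₀.le hr₁ hr hP.1 hθ₁
      ((adm_iff_pword_ne_zero hP.1 hl).2 hpl) h
    rw [abs_of_nonpos (Real.log_nonpos (pword_nonneg hP.1 l) (pword_le_one hP l))]
    gcongr

-- Stop the chain started at the first letter of `w` once the probability of the word is below `θ`:
-- the stopped word has entropy at most `-log (θ r)`, but its entropy is `-γ` times the mean number
-- of steps up to `2‖h‖`, and `w` alone contributes `θ (|w| - 1)` to that mean.
theorem neg_mul_length_sub_one_le_of_le_pword (hP : P ∈ rowStochastic ℝ (Fin N)) {h : Fin N → ℝ}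
    {γ : ℝ} (hh : SolvesPoisson P (logDrift P P) h γ) (hγ : γ ≤ 0) (hr₀ : 0 < r) (hr₁ : r ≤ 1)
    (hr : ∀ i j, 0 < P i j → r ≤ P i j) (hθ₀ : 0 < θ) (hθ₁ : θ ≤ 1) {w : List (Fin N)}
    (hw : w ≠ []) (hθw : θ ≤ pword P w) :
    -γ * (θ * ((w.length : ℝ) - 1)) ≤ 2 * ‖h‖ - Real.log (θ * r) := by
  obtain ⟨a, w, rfl⟩ := List.exists_cons_of_ne_nil hw
  set q : Fin N → ℝ := Pi.single a 1
  have hq : 0 ≤ q := Pi.single_nonneg.2 zero_le_one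
  have hq1 : ∑ i, q i = 1 := by simp [q]
  have hB := isCut_stoppedWords_le_pword hP hθ₁ (List.length_pos_of_ne_nil hw)
  have hwB : a :: w ∈ stoppedWords (fun l => θ ≤ pword P l) (a :: w).length :=
    mem_stoppedWords.2
      ⟨le_rfl, hw, hθw.trans (pword_le_of_isPrefix hP ⟨_, List.dropLast_concat_getLast hw⟩),
        fun _ => rfl⟩
  set B := stoppedWords (fun l => θ ≤ pword P l) (a :: w).length
  have h_steps : θ * (((a :: w).length : ℝ) - 1) ≤ meanSteps q P B := by
    refine le_trans ?_ (hB.mlist_mul_le_meanSteps hP.1 hq hwB)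
    have hm : mlist q P (a :: w) = pword P (a :: w) := by simp [mlist, q]
    rw [hm]
    gcongr
    simp
  have h_entropy : |∑ l ∈ B, mlist q P l * Real.log (pword P l)| ≤ -Real.log (θ * r) :=
    abs_sum_mul_le_of_sum_eq_one (fun l _ => mlist_nonneg hP.1 hq l) (hB.sum_mlist hP hq1)
      fun l hl => abs_log_pword_le hP hr₀ hr₁ hr hθ₀ hθ₁ (hB.ne_nil l hl)
        (mem_stoppedWords.1 hl).2.2.1
  calc -γ * (θ * (((a :: w).length : ℝ) - 1)) ≤ -γ * meanSteps q P B :=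
        mul_le_mul_of_nonneg_left h_steps (neg_nonneg.2 hγ)
    _ ≤ 2 * ‖h‖ - Real.log (θ * r) := by
        linarith [(abs_le.1 h_entropy).1,
          (abs_le.1 (hB.abs_sum_log_pword_sub_le hP hq hq1 (fun _ _ => id) hh)).2]

theorem exists_length_le_of_le_pword (hP : P ∈ rowStochastic ℝ (Fin N)) (hirr : P.IsIrreducible)
    (hP_lt : ∃ i j, 0 < P i j ∧ P i j < 1) (hr₀ : 0 < r) (hr₁ : r ≤ 1)
    (hr : ∀ i j, 0 < P i j → r ≤ P i j) (hθ₀ : 0 < θ) (hθ₁ : θ ≤ 1) :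
    ∃ n, ∀ l, θ ≤ pword P l → l.length ≤ n := by
  obtain ⟨i, j, hij_pos, hij_lt⟩ := hP_lt
  have : Nonempty (Fin N) := ⟨i⟩
  obtain ⟨h, γ, hh⟩ := exists_solvesPoisson hP hirr (logDrift P P)
  have hP_le : ∀ i j, 0 < P i j → 0 < P i j ∧ P i j ≤ 1 := fun i j hij =>
    ⟨hij, le_one_of_mem_rowStochastic hP⟩
  have hγ : γ < 0 :=
    hh.neg_of_nonpos hP hirr (logDrift_nonpos hP.1 hP_le) (logDrift_neg hP.1 hP_le hij_pos hij_lt)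
  obtain ⟨n, hn⟩ := exists_nat_ge ((2 * ‖h‖ - Real.log (θ * r)) / (-γ * θ) + 1)
  refine ⟨n, fun w hθw => ?_⟩
  rcases eq_or_ne w [] with rfl | hw
  · exact n.zero_le
  have h_le : (w.length : ℝ) - 1 ≤ (2 * ‖h‖ - Real.log (θ * r)) / (-γ * θ) := by
    rw [le_div_iff₀' (mul_pos (neg_pos.2 hγ) hθ₀), mul_assoc]
    exact neg_mul_length_sub_one_le_of_le_pword hP hh hγ.le hr₀ hr₁ hr hθ₀ hθ₁ hw hθw
  exact_mod_cast (sub_le_iff_le_add.1 h_le).trans hn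

theorem exists_isCut_mem_firstPassage_iff (hP : P ∈ rowStochastic ℝ (Fin N))
    (hirr : P.IsIrreducible) (hP_lt : ∃ i j, 0 < P i j ∧ P i j < 1) (hr₀ : 0 < r) (hr₁ : r ≤ 1)
    (hr : ∀ i j, 0 < P i j → r ≤ P i j) (hθ₀ : 0 < θ) (hθ₁ : θ ≤ 1) :
    ∃ n B, IsCut n B ∧ ∀ l, l ∈ firstPassage P θ ↔ l ∈ B ∧ pword P l ≠ 0 := by
  obtain ⟨n, hn⟩ := exists_length_le_of_le_pword hP hirr hP_lt hr₀ hr₁ hr hθ₀ hθ₁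
  refine ⟨n + 1, _, isCut_stoppedWords_le_pword hP hθ₁ n.succ_pos, fun l => ?_⟩
  rw [mem_stoppedWords]
  constructor
  · rintro ⟨hl, h_dropLast, h_lt⟩
    have := hn _ h_dropLast
    exact ⟨⟨by grind, hl.1, h_dropLast, fun h => absurd h h_lt.not_ge⟩,
      (adm_iff_pword_ne_zero hP.1 hl.1).1 hl⟩
  · rintro ⟨⟨-, hl, h_dropLast, h_stop⟩, hpl⟩
    exact ⟨(adm_iff_pword_ne_zero hP.1 hl).2 hpl, h_dropLast,
      not_le.1 fun h => (Nat.lt_succ_of_le (hn l h)).ne (h_stop h)⟩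

theorem finsum_mem_mlist_mul {S : Set (List (Fin N))} {B : Finset (List (Fin N))}
    (hS : ∀ l, l ∈ S ↔ l ∈ B ∧ pword P l ≠ 0) (F : List (Fin N) → ℝ) :
    ∑ᶠ l ∈ S, mlist q P l * F l = ∑ l ∈ B, mlist q P l * F l := by
  refine finsum_mem_eq_sum_of_inter_support_eq _ (Set.ext fun l => ?_)
  simp only [Set.mem_inter_iff, hS, Function.mem_support, mem_coe, and_congr_left_iff,
    and_iff_left_iff_imp]
  exact fun hl _ => right_ne_zero_of_mul (left_ne_zero_of_mul hl)

section Lengths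

variable {n : ℕ} {B : Finset (List (Fin N))} {S : Set (List (Fin N))}

theorem IsCut.nonempty_of_mem_iff (hB : IsCut n B) (hP : P ∈ rowStochastic ℝ (Fin N))
    (hq1 : ∑ i, q i = 1) (hS : ∀ l, l ∈ S ↔ l ∈ B ∧ pword P l ≠ 0) : S.Nonempty := by
  obtain ⟨l, hl, hm⟩ := exists_ne_zero_of_sum_ne_zero ((hB.sum_mlist hP hq1).trans_ne one_ne_zero)
  exact ⟨l, (hS l).2 ⟨hl, right_ne_zero_of_mul hm⟩⟩

theorem IsCut.sInf_length_le_sSup_length (hB : IsCut n B) (hSB : ∀ l ∈ S, l ∈ B)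
    (hS : S.Nonempty) : sInf (List.length '' S) ≤ sSup (List.length '' S) :=
  csInf_le_csSup (hS.image _) (OrderBot.bddBelow _)
    ⟨n, Set.forall_mem_image.2 fun l hl => hB.length_le l (hSB l hl)⟩

theorem lt_sInf_length_firstPassage (hr₀ : 0 ≤ r) (hr₁ : r ≤ 1)
    (hr : ∀ i j, 0 < P i j → r ≤ P i j) {j : ℕ} (h_ne : (firstPassage P (r ^ j)).Nonempty) :
    j < sInf (List.length '' firstPassage P (r ^ j)) := by
  obtain ⟨l, hl, hl_len⟩ := Nat.sInf_mem (h_ne.image List.length)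
  exact hl_len ▸ lt_length_of_mem_firstPassage hr₀ hr₁ hr hl

end Lengths

end FirstPassage

section Main

variable {N : ℕ} {P : Matrix (Fin N) (Fin N) ℝ}

theorem exists_pos_of_mem_rowStochastic (hP : P ∈ rowStochastic ℝ (Fin N)) (i : Fin N) :
    ∃ j, 0 < P i j := by
  by_contra! h
  linarith [sum_row_of_mem_rowStochastic hP i, sum_nonpos fun j (_ : j ∈ univ) => h j]

theorem isLeast_sInf_pos_entries [NeZero N] (hP : P ∈ rowStochastic ℝ (Fin N)) :
    IsLeast {x | ∃ i j, 0 < P i j ∧ P i j = x} (sInf {x | ∃ i j, 0 < P i j ∧ P i j = x}) := by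
  have h_fin : {x | ∃ i j, 0 < P i j ∧ P i j = x}.Finite :=
    (Set.finite_range fun a : Fin N × Fin N => P a.1 a.2).subset
      fun x ⟨i, j, _, hx⟩ => ⟨(i, j), hx⟩
  obtain ⟨j, hj⟩ := exists_pos_of_mem_rowStochastic hP 0
  exact ⟨Set.Nonempty.csInf_mem ⟨P 0 j, 0, j, hj, rfl⟩ h_fin,
    fun x hx => csInf_le h_fin.bddBelow hx⟩

theorem lseq_zero (q : Fin N → ℝ) (P c : Matrix (Fin N) (Fin N) ℝ) : lseq q P c 0 = 0 :=
  sum_eq_zero fun σ _ => by simp [wprod]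

end Main

theorem stmt9_general {N : ℕ} (P c : Matrix (Fin N) (Fin N) ℝ)
    (hP : P ∈ rowStochastic ℝ (Fin N)) (hirr : P.IsIrreducible)
    (hc : ∀ i j, 0 < P i j → 0 < c i j ∧ c i j ≤ 1) (hc_lt : ∃ i j, 0 < P i j ∧ c i j < 1)
    (q : Fin N → ℝ) (hq : ∀ i, 0 ≤ q i) (hq1 : ∑ i, q i = 1)
    (pmin : ℝ) (hpmin : pmin = sInf {x : ℝ | ∃ i j, 0 < P i j ∧ P i j = x})
    (Λ : ℕ → Set (List (Fin N))) (hΛ : ∀ j, Λ j = firstPassage P (pmin ^ j))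
    (k1 k2 : ℕ → ℕ)
    (hk1 : ∀ j, k1 j = sInf (List.length '' Λ j))
    (hk2 : ∀ j, k2 j = sSup (List.length '' Λ j))
    (t : ℕ → ℝ)
    (ht : ∀ j, t j = (∑ᶠ σ ∈ Λ j, mlist q P σ * Real.log (mlist q P σ)) /
                     (∑ᶠ σ ∈ Λ j, mlist q P σ * Real.log (pword c σ)))
    (s : ℕ → ℝ) (hs : ∀ k, s k = useq q P k / lseq q P c k) :
    ∃ C3 : ℝ, ∃ J : ℕ, ∀ j ≥ J, k1 j ≤ k2 j ∧
      ∀ k ∈ Set.Icc (k1 j) (k2 j), |t j - s k| ≤ C3 / j := by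
  obtain rfl : Λ = fun j => firstPassage P (pmin ^ j) := funext hΛ
  have : NeZero N := ⟨by rintro rfl; exact hc_lt.choose.elim0⟩
  obtain ⟨⟨a, b, hab, rfl⟩, h_least⟩ := hpmin ▸ isLeast_sInf_pos_entries hP
  have h_lower : ∀ i j, 0 < P i j → P a b ≤ P i j := fun i j hij => h_least ⟨i, j, hij, rfl⟩
  have hab_le : P a b ≤ 1 := le_one_of_mem_rowStochastic hP
  rcases hab_le.lt_or_eq with hab_lt | hab_one
  · obtain ⟨ρ, D, J, h_near⟩ := exists_abs_logRatio_sub_le hP hirr hc hc_lt hq hq1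
    refine ⟨2 * D, J, fun j hj => ?_⟩
    obtain ⟨n, B, hB, hΛB⟩ := exists_isCut_mem_firstPassage_iff hP hirr ⟨a, b, hab, hab_lt⟩ hab
      hab_le h_lower (pow_pos hab j) (pow_le_one₀ hab.le hab_le)
    have hΛ_ne := hB.nonempty_of_mem_iff hP hq1 hΛB
    rw [hk1, hk2]
    refine ⟨hB.sInf_length_le_sSup_length (fun l hl => ((hΛB l).1 hl).1) hΛ_ne, fun k hk => ?_⟩
    have hjk : j < k := (lt_sInf_length_firstPassage hab.le hab_le h_lower hΛ_ne).trans_le hk.1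
    have ht_near : |t j - ρ| ≤ D / j := by
      rw [ht, finsum_mem_mlist_mul hΛB, finsum_mem_mlist_mul hΛB]
      exact h_near j hj n B hB fun l hl hm => lt_length_of_mem_firstPassage hab.le hab_le h_lower
        ((hΛB l).2 ⟨hl, right_ne_zero_of_mul hm⟩)
    have hs_near : |s k - ρ| ≤ D / j := by
      rw [hs, ← logRatio_words q P c (Nat.zero_lt_of_lt hjk)]
      exact h_near j hj k _ (isCut_words (Nat.zero_lt_of_lt hjk) le_rfl) fun l hl _ =>
        hjk.trans_eq (mem_words.1 hl).symm
    calc |t j - s k| ≤ |t j - ρ| + |s k - ρ| := abs_sub_comm (s k) ρ ▸ abs_sub_le _ _ _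
      _ ≤ 2 * D / j := by linarith [mul_div_assoc 2 D (j : ℝ)]
  · -- Here `Λ_j` is empty, so `k_{1j} = k_{2j} = 0`, and `t_j` and `s_0` are both `x / 0 = 0`.
    have hΛ_empty : firstPassage P 1 = ∅ := firstPassage_one_eq_empty (hab_one ▸ h_lower)
    refine ⟨0, 0, fun j _ => ?_⟩
    have hk : k1 j = 0 ∧ k2 j = 0 := by simp [hk1, hk2, hab_one, hΛ_empty]
    refine ⟨by lia, fun k ⟨_, hk_le⟩ => ?_⟩
    obtain rfl : k = 0 := by lia
    simp [ht, hs, hab_one, hΛ_empty, lseq_zero]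

theorem stmt9 {N : ℕ} (P c : Matrix (Fin N) (Fin N) ℝ)
    (hnn : ∀ i j, 0 ≤ P i j) (hrow : ∀ i, ∑ j, P i j = 1)
    (hirr : ∀ i j, ∃ m, 1 ≤ m ∧ 0 < (P ^ m) i j)
    (hc : ∀ i j, 0 < P i j → 0 < c i j ∧ c i j < 1)
    (hc0 : ∀ i j, P i j = 0 → c i j = 0)
    (q : Fin N → ℝ) (hq : ∀ i, 0 < q i) (hq1 : ∑ i, q i = 1)
    (pmin : ℝ) (hpmin : pmin = sInf {x : ℝ | ∃ i j, 0 < P i j ∧ P i j = x})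
    (Λ : ℕ → Set (List (Fin N)))
    (hΛ : ∀ j, Λ j = {l | adm P l ∧
      pmin ^ j ≤ pword P l.dropLast ∧ pword P l < pmin ^ j})
    (k1 k2 : ℕ → ℕ)
    (hk1 : ∀ j, k1 j = sInf (List.length '' Λ j))
    (hk2 : ∀ j, k2 j = sSup (List.length '' Λ j))
    (t : ℕ → ℝ)
    (ht : ∀ j, t j = (∑ᶠ σ ∈ Λ j, mlist q P σ * Real.log (mlist q P σ)) /
                     (∑ᶠ σ ∈ Λ j, mlist q P σ * Real.log (pword c σ)))
    (s : ℕ → ℝ) (hs : ∀ k, s k = useq q P k / lseq q P c k) :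
    ∃ C3 : ℝ, ∃ J : ℕ, ∀ j : ℕ, J ≤ j →
      ∃ kj1 ∈ Set.Icc (k1 j) (k2 j), ∃ kj2 ∈ Set.Icc (k1 j) (k2 j),
        s kj1 - C3 / (j : ℝ) ≤ t j ∧ t j ≤ s kj2 + C3 / (j : ℝ) := by
  have hP : P ∈ rowStochastic ℝ (Fin N) := mem_rowStochastic_iff_sum.2 ⟨hnn, hrow⟩
  have hirr' : P.IsIrreducible := (isIrreducible_iff_exists_pow_pos hnn).2 hirr
  have hc_lt : ∃ i j, 0 < P i j ∧ c i j < 1 := by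
    obtain ⟨i, -, -⟩ := exists_ne_zero_of_sum_ne_zero (hq1.trans_ne one_ne_zero)
    obtain ⟨j, hij⟩ := exists_pos_of_mem_rowStochastic hP i
    exact ⟨i, j, hij, (hc i j hij).2⟩
  obtain ⟨C, J, hJ⟩ := stmt9_general P c hP hirr' (fun i j hij => (hc i j hij).imp_right le_of_lt)
    hc_lt q (fun i => (hq i).le) hq1 pmin hpmin Λ hΛ k1 k2 hk1 hk2 t ht s hs
  refine ⟨C, J, fun j hj => ?_⟩
  obtain ⟨hk, h_near⟩ := hJ j hj
  obtain ⟨h_lower, h_upper⟩ := abs_le.1 (h_near _ (Set.left_mem_Icc.2 hk))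
  exact ⟨k1 j, Set.left_mem_Icc.2 hk, k1 j, Set.left_mem_Icc.2 hk, by linarith, by linarith⟩
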